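/- Let n ≥ 1 and let (P_1,…,P_n) be a family of preference sets: each P_j ⊆ ℝ^n is closed, p ∉ P_j whenever p_j ≥ 1, and Σ_n ⊆ ∪_{j=1}^n P_j. Then the sets C_j := φ(P_j ∩ Σ_n), j ∈ {1,…,n}, form a sparse KKM covering of Δ_{n−1}. -/

import Mathlib

/-!
On each cell `SigmaPerm π` the map `φ` is given by the formula `phiFormula π`, in which every
increment `p_{π(l-1)} - p_{π(l)} ≥ 0` is divided by a number in `[1, n]`. Telescoping gives
`φ(p)_i ≥ (1 - p_i) / n` on all of `Σ_n` (`le_phiFormula`), so `φ(p)_i > 0` whenever `p_i < 1`, in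
particular whenever `p ∈ P_i`. This is sparseness, since points of the face opposite to vertex
`i` have vanishing `i`-th coordinate.

For the covering property, `φ` maps `Σ_n` onto the simplex: a preimage of `x` is
`p_i = ∑ m, max (x_m - x_i) 0` (`phiFormula_preimage`). If `x ∈ F_S` and `p ∈ P_j` is a preimage
of `x`, then `x_j > 0` by the bound above, hence `j ∈ S`.

Each `C_j` is closed because it is the finite union over `π` of the images of the compact sets
`P_j ∩ SigmaPerm π` under the continuous maps `phiFormula π`.
-/

/-- `Σ_n`: the set of price vectors `p` with `0 ≤ p_i ≤ 1` for all `i` and `p_j = 0` for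
some `j`. -/
def SigmaN (n : ℕ) : Set (Fin n → ℝ) :=
  {p | (∀ i, 0 ≤ p i ∧ p i ≤ 1) ∧ ∃ j, p j = 0}

/-- The values of `p` read in the order given by the permutation `π` (0-based), extended by
`0` beyond index `n`. -/
def seqOf {n : ℕ} (π : Equiv.Perm (Fin n)) (p : Fin n → ℝ) : ℕ → ℝ :=
  fun j => if h : j < n then p (π ⟨j, h⟩) else 0

/-- `Σ_π = {p ∈ Σ_n : p_{π(1)} ≥ p_{π(2)} ≥ ⋯ ≥ p_{π(n)} = 0}`. -/
def SigmaPerm {n : ℕ} (π : Equiv.Perm (Fin n)) : Set (Fin n → ℝ) :=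
  {p | p ∈ SigmaN n ∧ (∀ j, j + 1 < n → seqOf π p (j + 1) ≤ seqOf π p j) ∧
    seqOf π p (n - 1) = 0}

/-- The defining formula for `φ(p)_{π(k)}` on `Σ_π` (with `k` 0-based):
`φ(p)_{π(k)} = (1 - p_{π(1)})/n + ∑_{l=2}^{k} (p_{π(l-1)} - p_{π(l)})/(n - l + 1)`. -/
noncomputable def phiFormula {n : ℕ} (π : Equiv.Perm (Fin n)) (p : Fin n → ℝ) (k : Fin n) : ℝ :=
  (1 - seqOf π p 0) / n +
    ∑ j ∈ Finset.range k.val, (seqOf π p j - seqOf π p (j + 1)) / ((n : ℝ) - j - 1)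

/-- The face of the standard simplex spanned by the basis vectors indexed by `S`. -/
def faceOf {n : ℕ} (S : Finset (Fin n)) : Set (Fin n → ℝ) :=
  convexHull ℝ {x | ∃ i ∈ S, x = Pi.single i (1 : ℝ)}

/-- A KKM covering of the standard simplex: a family of closed sets such that every face
`F_S` is covered by the sets indexed by `S`. -/
def IsKKMCovering {n : ℕ} (C : Fin n → Set (Fin n → ℝ)) : Prop :=
  (∀ i, IsClosed (C i)) ∧
    ∀ S : Finset (Fin n), S.Nonempty → faceOf S ⊆ ⋃ i ∈ S, C i

/-- A KKM covering is sparse if `C i` is disjoint from the face opposite vertex `i`. -/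
def IsSparse {n : ℕ} (C : Fin n → Set (Fin n → ℝ)) : Prop :=
  ∀ i, C i ∩ faceOf (Finset.univ.erase i) = ∅

lemma seqOf_fin {n : ℕ} (π : Equiv.Perm (Fin n)) (p : Fin n → ℝ) (k : Fin n) :
    seqOf π p k = p (π k) := by
  simp [seqOf]

lemma continuous_seqOf {n : ℕ} (π : Equiv.Perm (Fin n)) (j : ℕ) :
    Continuous fun p => seqOf π p j := by
  unfold seqOf
  split_ifs <;> fun_prop

lemma continuous_phiFormula {n : ℕ} (π : Equiv.Perm (Fin n)) (k : Fin n) :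
    Continuous fun p => phiFormula π p k := by
  have h := continuous_seqOf π
  unfold phiFormula
  fun_prop

lemma isCompact_sigmaPerm {n : ℕ} (π : Equiv.Perm (Fin n)) : IsCompact (SigmaPerm π) := by
  have h := continuous_seqOf π
  have hc : IsClosed (SigmaPerm π) := by
    have e : SigmaPerm π = (⋂ i, {p | 0 ≤ p i ∧ p i ≤ 1}) ∩ (⋃ j, {p | p j = 0}) ∩
        ((⋂ j, ⋂ (_ : j + 1 < n), {p | seqOf π p (j + 1) ≤ seqOf π p j}) ∩
          {p | seqOf π p (n - 1) = 0}) := by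
      ext p
      simp [SigmaPerm, SigmaN]
    rw [e]
    refine ((isClosed_iInter fun i => ?_).inter (isClosed_iUnion_of_finite fun j => ?_)).inter
      ((isClosed_iInter fun j => isClosed_iInter fun _ => isClosed_le (h _) (h _)).inter
        (isClosed_eq (h _) continuous_const))
    · exact (isClosed_le continuous_const (continuous_apply i)).inter
        (isClosed_le (continuous_apply i) continuous_const)
    · exact isClosed_eq (continuous_apply j) continuous_const
  refine (isCompact_Icc (a := (0 : Fin n → ℝ)) (b := 1)).of_isClosed_subset hc ?_
  intro p hp
  exact ⟨fun i => (hp.1.1 i).1, fun i => (hp.1.1 i).2⟩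

lemma exists_mem_sigmaPerm {n : ℕ} {p : Fin n → ℝ} (hp : p ∈ SigmaN n) :
    ∃ π : Equiv.Perm (Fin n), p ∈ SigmaPerm π := by
  obtain ⟨h01, j, hj⟩ := hp
  have hn : 0 < n := j.pos
  have hm := Tuple.monotone_sort fun i => -p i
  set π := Tuple.sort fun i => -p i
  refine ⟨π, ⟨h01, j, hj⟩, fun i hi => ?_, ?_⟩
  · have := hm (show (⟨i, by omega⟩ : Fin n) ≤ ⟨i + 1, hi⟩ from Nat.le_succ i)
    simp only [Function.comp] at this
    simp only [seqOf, hi, show i < n by omega, dif_pos]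
    linarith
  · have h1 : n - 1 < n := by omega
    have := hm (show π.symm j ≤ ⟨n - 1, h1⟩ from by
      have := (π.symm j).2
      rw [Fin.le_def]
      show (π.symm j : ℕ) ≤ n - 1
      omega)
    simp only [Function.comp, Equiv.apply_symm_apply, hj] at this
    simp only [seqOf, h1, dif_pos]
    have := (h01 (π ⟨n - 1, h1⟩)).1
    linarith

/-- Replacing each denominator of `phiFormula` by the larger number `n` makes the sum
telescope to `(1 - p_{π(k)}) / n`. -/
lemma le_phiFormula {n : ℕ} {π : Equiv.Perm (Fin n)} {p : Fin n → ℝ} (hp : p ∈ SigmaPerm π)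
    (k : Fin n) : (1 - p (π k)) / n ≤ phiFormula π p k := by
  have hsum : ∑ j ∈ Finset.range k.val, (seqOf π p j - seqOf π p (j + 1)) / (n : ℝ) ≤
      ∑ j ∈ Finset.range k.val, (seqOf π p j - seqOf π p (j + 1)) / ((n : ℝ) - j - 1) := by
    refine Finset.sum_le_sum fun j hj => ?_
    have hjn : j + 1 < n := by
      have := k.2
      have := Finset.mem_range.1 hj
      omega
    have hmono := hp.2.1 j hjn
    have hcast : (j : ℝ) + 1 < n := by exact_mod_cast hjn
    have hj0 : (0 : ℝ) ≤ j := j.cast_nonneg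
    exact div_le_div_of_nonneg_left (by linarith) (by linarith) (by linarith)
  rw [← Finset.sum_div, Finset.sum_range_sub', seqOf_fin] at hsum
  unfold phiFormula
  calc (1 - p (π k)) / n = (1 - seqOf π p 0) / n + (seqOf π p 0 - p (π k)) / n := by ring
    _ ≤ _ := by linarith

/-- The formula for `φ` inverts `x ↦ (∑ m, max (x_m - x_i) 0)_i`: if `π` lists the coordinates
of `x` in increasing order, then consecutive values of the preimage differ by
`(n - j - 1) (x_{π(j+1)} - x_{π(j)})` (with `j` 0-based), and the sum telescopes. -/
lemma phiFormula_preimage {n : ℕ} (x : Fin n → ℝ) (hx : ∑ i, x i = 1)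
    (π : Equiv.Perm (Fin n)) (hm : Monotone (x ∘ π)) (k : Fin n) :
    phiFormula π (fun i => ∑ m, max (x m - x i) 0) k = x (π k) := by
  have hn : 0 < n := k.pos
  have hn' : (n : ℝ) ≠ 0 := by positivity
  set p : Fin n → ℝ := fun i => ∑ m, max (x m - x i) 0 with hp
  have hpπ : ∀ j, p (π j) = ∑ m, max (x (π m) - x (π j)) 0 := fun j =>
    (Equiv.sum_comp π fun m => max (x m - x (π j)) 0).symm
  have h0 : seqOf π p 0 = 1 - n * seqOf π x 0 := by
    have e : ∀ q, seqOf π q 0 = q (π ⟨0, hn⟩) := fun q => seqOf_fin π q ⟨0, hn⟩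
    rw [e, e, hpπ]
    have : ∀ m, max (x (π m) - x (π ⟨0, hn⟩)) 0 = x (π m) - x (π ⟨0, hn⟩) := fun m =>
      max_eq_left (sub_nonneg.2 (hm (Fin.le_def.2 (Nat.zero_le _))))
    simp only [this, Finset.sum_sub_distrib, Equiv.sum_comp π x, hx]
    simp
  have hstep : ∀ j ∈ Finset.range k.val,
      (seqOf π p j - seqOf π p (j + 1)) / ((n : ℝ) - j - 1) =
        seqOf π x (j + 1) - seqOf π x j := by
    intro j hj
    have hjn : j + 1 < n := by
      have := k.2
      have := Finset.mem_range.1 hj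
      omega
    have hcast : (j : ℝ) + 1 < n := by exact_mod_cast hjn
    let a : Fin n := ⟨j, by omega⟩
    let b : Fin n := ⟨j + 1, hjn⟩
    have ea : ∀ q, seqOf π q j = q (π a) := fun q => seqOf_fin π q a
    have eb : ∀ q, seqOf π q (j + 1) = q (π b) := fun q => seqOf_fin π q b
    have hab : x (π a) ≤ x (π b) := hm (Fin.le_def.2 (Nat.le_succ j))
    rw [ea, eb, ea, eb, hpπ, hpπ, ← Finset.sum_sub_distrib]
    have hterm : ∀ m, max (x (π m) - x (π a)) 0 - max (x (π m) - x (π b)) 0 =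
        if a < m then x (π b) - x (π a) else 0 := by
      intro m
      split_ifs with h
      · have : x (π b) ≤ x (π m) := hm (Fin.le_def.2 (Nat.succ_le_of_lt (Fin.lt_def.1 h)))
        rw [max_eq_left (by linarith), max_eq_left (by linarith)]
        ring
      · have : x (π m) ≤ x (π a) := hm (not_lt.1 h)
        rw [max_eq_right (by linarith), max_eq_right (by linarith), sub_zero]
    have hcard : ((Finset.univ.filter fun m => a < m).card : ℝ) = n - j - 1 := by
      rw [Finset.filter_lt_eq_Ioi, Fin.card_Ioi, Nat.sub_sub, Nat.cast_sub (by simp [a]; omega)]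
      simp [a]
      ring
    rw [Finset.sum_congr rfl fun m _ => hterm m, ← Finset.sum_filter, Finset.sum_const,
      nsmul_eq_mul, hcard, mul_div_cancel_left₀]
    linarith
  rw [phiFormula, Finset.sum_congr rfl hstep, Finset.sum_range_sub, h0, seqOf_fin]
  field_simp
  ring

lemma faceOf_subset {n : ℕ} (S : Finset (Fin n)) :
    faceOf S ⊆ stdSimplex ℝ (Fin n) ∩ {x | ∀ i ∉ S, x i = 0} := by
  refine convexHull_min ?_ ((convex_stdSimplex ℝ (Fin n)).inter ?_)
  · rintro _ ⟨i, hi, rfl⟩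
    refine ⟨single_mem_stdSimplex ℝ i, fun j hj => Pi.single_eq_of_ne ?_ _⟩
    rintro rfl
    exact hj hi
  · intro x hx y hy a b _ _ _ i hi
    simp [hx i hi, hy i hi]

/-- The candidate preimage of a point of the simplex lies in `Σ_n`. -/
lemma preimage_mem_sigmaN {n : ℕ} {x : Fin n → ℝ} (hx : x ∈ stdSimplex ℝ (Fin n)) :
    (fun i => ∑ m, max (x m - x i) 0) ∈ SigmaN n := by
  refine ⟨fun i => ⟨Finset.sum_nonneg fun m _ => le_max_right _ _, ?_⟩, ?_⟩
  · rw [← hx.2]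
    exact Finset.sum_le_sum fun m _ => max_le (by linarith [hx.1 i]) (hx.1 m)
  · have : Nonempty (Fin n) := by
      by_contra h
      rw [not_nonempty_iff] at h
      simpa using hx.2
    -- the preimage vanishes where `x` attains its maximum
    obtain ⟨j, hj⟩ := Finite.exists_max x
    exact ⟨j, Finset.sum_eq_zero fun m _ => max_eq_right (by linarith [hj m])⟩

/-- If `π` orders `x` increasingly, it orders the candidate preimage decreasingly. -/
lemma preimage_mem_sigmaPerm {n : ℕ} {x : Fin n → ℝ} (hx : x ∈ stdSimplex ℝ (Fin n))
    {π : Equiv.Perm (Fin n)} (hm : Monotone (x ∘ π)) :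
    (fun i => ∑ m, max (x m - x i) 0) ∈ SigmaPerm π := by
  have hmem := preimage_mem_sigmaN hx
  have hn : 0 < n := hmem.2.choose.pos
  refine ⟨hmem, fun j hj => ?_, ?_⟩
  · have : x (π ⟨j, by omega⟩) ≤ x (π ⟨j + 1, hj⟩) := hm (Fin.le_def.2 (Nat.le_succ j))
    simp only [seqOf, hj, show j < n by omega, dif_pos]
    exact Finset.sum_le_sum fun m _ => max_le_max (by linarith) le_rfl
  · have h1 : n - 1 < n := by omega
    simp only [seqOf, h1, dif_pos]
    refine Finset.sum_eq_zero fun m _ => max_eq_right ?_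
    have : (x ∘ π) (π.symm m) ≤ (x ∘ π) ⟨n - 1, h1⟩ := hm (Fin.le_def.2 (by
      have := (π.symm m).2
      show (π.symm m : ℕ) ≤ n - 1
      omega))
    simp only [Function.comp, Equiv.apply_symm_apply] at this
    linarith

/-- If `(P_1, …, P_n)` is a family of preference sets (each `P_j` closed, `p ∉ P_j` whenever
`p_j ≥ 1`, and `Σ_n ⊆ ∪_j P_j`), then the sets `C_j := φ(P_j ∩ Σ_n)` form a sparse KKM
covering of the standard simplex. -/
theorem preference_sets_to_sparse_kkm (n : ℕ) (hn : 1 ≤ n)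
    (φ : (Fin n → ℝ) → (Fin n → ℝ))
    (hφ : ∀ π : Equiv.Perm (Fin n), ∀ p ∈ SigmaPerm π, ∀ k : Fin n,
      φ p (π k) = phiFormula π p k)
    (P : Fin n → Set (Fin n → ℝ))
    (hclosed : ∀ j, IsClosed (P j))
    (hbound : ∀ j (p : Fin n → ℝ), 1 ≤ p j → p ∉ P j)
    (hcover : SigmaN n ⊆ ⋃ j, P j) :
    IsKKMCovering (fun j => φ '' (P j ∩ SigmaN n)) ∧
      IsSparse (fun j => φ '' (P j ∩ SigmaN n)) := by
  have hpos : ∀ j, ∀ p ∈ P j ∩ SigmaN n, 0 < φ p j := by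
    intro j p hp
    obtain ⟨π, hπ⟩ := exists_mem_sigmaPerm hp.2
    have hlt : p j < 1 := not_le.1 fun h => hbound j p h hp.1
    have hle := le_phiFormula hπ (π.symm j)
    rw [← hφ π p hπ, Equiv.apply_symm_apply] at hle
    exact lt_of_lt_of_le (div_pos (by linarith) (by exact_mod_cast hn)) hle
  refine ⟨⟨fun j => ?_, fun S _ x hx => ?_⟩, fun i => ?_⟩
  · have hunion : φ '' (P j ∩ SigmaN n) = ⋃ π : Equiv.Perm (Fin n),
        (fun p i => phiFormula π p (π.symm i)) '' (P j ∩ SigmaPerm π) := by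
      have hagree : ∀ π : Equiv.Perm (Fin n), ∀ p ∈ SigmaPerm π,
          (fun i => phiFormula π p (π.symm i)) = φ p := by
        intro π p hp
        funext i
        rw [← hφ π p hp, Equiv.apply_symm_apply]
      ext x
      simp only [Set.mem_iUnion, Set.mem_image]
      constructor
      · rintro ⟨p, hp, rfl⟩
        obtain ⟨π, hπ⟩ := exists_mem_sigmaPerm hp.2
        exact ⟨π, p, ⟨hp.1, hπ⟩, hagree π p hπ⟩
      · rintro ⟨π, p, hp, rfl⟩
        exact ⟨p, ⟨hp.1, hp.2.1⟩, (hagree π p hp.2).symm⟩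
    show IsClosed (φ '' (P j ∩ SigmaN n))
    rw [hunion]
    exact isClosed_iUnion_of_finite fun π =>
      (((isCompact_sigmaPerm π).inter_left (hclosed j)).image
        (continuous_pi fun i => continuous_phiFormula π (π.symm i))).isClosed
  · obtain ⟨hx1, hxS⟩ := faceOf_subset S hx
    have hm := Tuple.monotone_sort x
    have hp := preimage_mem_sigmaPerm hx1 hm
    have hφx : φ (fun i => ∑ m, max (x m - x i) 0) = x := by
      funext i
      obtain ⟨k, rfl⟩ := (Tuple.sort x).surjective i
      rw [hφ _ _ hp, phiFormula_preimage x hx1.2 _ hm]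
    obtain ⟨j, hj⟩ := Set.mem_iUnion.1 (hcover hp.1)
    have hxj := hpos j _ ⟨hj, hp.1⟩
    rw [hφx] at hxj
    refine Set.mem_iUnion₂.2 ⟨j, ?_, _, ⟨hj, hp.1⟩, hφx⟩
    by_contra h
    exact hxj.ne' (hxS j h)
  · rw [Set.eq_empty_iff_forall_notMem]
    rintro _ ⟨⟨p, hp, rfl⟩, hface⟩
    exact (hpos i p hp).ne' ((faceOf_subset _ hface).2 i (Finset.notMem_erase _ _))
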